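/- Let P ⊆ ℝ^d be a d-dimensional simplicial reflexive polytope. Assume that for every facet F of P there are at least d−1 vertices v ∈ 𝒱(F) whose neighboring vertex n(F,v) satisfies ⟨u_F, n(F,v)⟩ = 0. Then there exists a facet G of P such that 𝒱(G) is a ℤ-basis of the lattice ℤ^d. -/

import Mathlib

noncomputable section

/-- The standard inner product on `ℝ^d`. -/
def dotp {d : ℕ} (x y : Fin d → ℝ) : ℝ := ∑ i, x i * y i

/-- `x` is a point of the lattice `ℤ^d`. -/
def IsLP {d : ℕ} (x : Fin d → ℝ) : Prop := ∀ i, ∃ n : ℤ, x i = (n : ℝ)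

/-- A lattice polytope: convex hull of finitely many lattice points. -/
def IsLatticePolytope {d : ℕ} (P : Set (Fin d → ℝ)) : Prop :=
  ∃ V : Finset (Fin d → ℝ), (∀ v ∈ V, IsLP v) ∧ P = convexHull ℝ (V : Set (Fin d → ℝ))

/-- The dual polytope `P* = {x | ⟨x,y⟩ ≤ 1 ∀ y ∈ P}`. -/
def dualPolytope {d : ℕ} (P : Set (Fin d → ℝ)) : Set (Fin d → ℝ) :=
  {x | ∀ y ∈ P, dotp x y ≤ 1}

/-- `P` is a reflexive polytope: a (`d`-dimensional) lattice polytope with `0` in its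
interior whose dual is again a lattice polytope. -/
def IsReflexive {d : ℕ} (P : Set (Fin d → ℝ)) : Prop :=
  IsLatticePolytope P ∧ (0 : Fin d → ℝ) ∈ interior P ∧ IsLatticePolytope (dualPolytope P)

/-- `F` is a facet of `P` with (uniquely determined) outer normal `u`, normalized by
`⟨u, F⟩ = 1` (possible since `0` is in the interior of `P`). -/
def IsFacetNormal {d : ℕ} (P F : Set (Fin d → ℝ)) (u : Fin d → ℝ) : Prop :=
  F.Nonempty ∧ (∀ y ∈ P, dotp u y ≤ 1) ∧ F = {y ∈ P | dotp u y = 1} ∧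
    Module.finrank ℝ (vectorSpan ℝ F) = d - 1

/-- `F` is a facet of `P`. -/
def IsFacet {d : ℕ} (P F : Set (Fin d → ℝ)) : Prop := ∃ u, IsFacetNormal P F u

/-- `P` is simplicial: every facet has exactly `d` vertices. -/
def IsSimplicial {d : ℕ} (P : Set (Fin d → ℝ)) : Prop :=
  ∀ F, IsFacet P F → (Set.extremePoints ℝ F).ncard = d

/-- `F'` is the neighboring facet `N(F,w)`: a facet different from `F` containing all
vertices of `F` except `w`. -/
def NbrFacet {d : ℕ} (P F : Set (Fin d → ℝ)) (w : Fin d → ℝ) (F' : Set (Fin d → ℝ)) : Prop :=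
  IsFacet P F' ∧ F' ≠ F ∧ Set.extremePoints ℝ F \ {w} ⊆ F'

/-- `v'` is the neighboring vertex `n(F,w)`: the vertex of the neighboring facet `N(F,w)`
not contained in `F`. -/
def NbrVertex {d : ℕ} (P F : Set (Fin d → ℝ)) (w v' : Fin d → ℝ) : Prop :=
  ∃ F', NbrFacet P F w F' ∧ v' ∈ Set.extremePoints ℝ F' ∧ v' ∉ F

/-- The set `B` is a `ℤ`-basis of the lattice `ℤ^d`. -/
def IsZBasis {d : ℕ} (B : Set (Fin d → ℝ)) : Prop :=
  ∃ b : Fin d → (Fin d → ℝ), Function.Injective b ∧ Set.range b = B ∧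
    (∀ i, IsLP (b i)) ∧ ∀ x : Fin d → ℝ, IsLP x → ∃ c : Fin d → ℤ, x = ∑ i, (c i : ℝ) • b i

/-
Among the facets of `P`, choose one whose vertices span a parallelepiped of least volume. Its
vertices form a basis `B` of `ℝ^d`, and it remains to see that every lattice point has integral
coordinates in `B`. Let `u` and `u'` be the normals of this facet and of the one obtained by
exchanging the vertex `B i` for its neighbor `v`; they are vertices of the dual polytope, hence
lattice points by reflexivity. Since `u - u'` vanishes on all `B j` with `j ≠ i`, it is
`t • B.coord i` for an integer `t`. If `⟨u, v⟩ = 0`, evaluating at `v` gives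
`t * B.coord i v = -1`. The exchange multiplies the volume by `|B.coord i v|`, so minimality forces
`t = ±1`, and the coordinate function `B.coord i = ±(u - u')` is integral on `ℤ^d`. This covers all
but one index, and the last coordinate is integral because the sum of all of them is `⟨u, ·⟩`.
-/

open Function
open Module (Basis Dual finrank)

section LinearAlgebra

lemma finrank_span_eq_finrank_vectorSpan_add_one {K E : Type*} [Field K] [AddCommGroup E]
    [Module K E] [FiniteDimensional K E] {s : Set E} (hs : s.Nonempty) {f : Dual K E}
    (hf : ∀ x ∈ s, f x = 1) :
    finrank K (Submodule.span K s) = finrank K (vectorSpan K s) + 1 := by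
  obtain ⟨p, hp⟩ := hs
  have hker : vectorSpan K s ≤ LinearMap.ker f := by
    rw [vectorSpan_def, Submodule.span_le]
    rintro _ ⟨x, hx, y, hy, rfl⟩
    simp [hf x hx, hf y hy]
  have hp_notMem : p ∉ vectorSpan K s := fun h => by simpa [hf p hp] using hker h
  have hspan : Submodule.span K s = vectorSpan K s ⊔ Submodule.span K {p} := by
    refine le_antisymm (Submodule.span_le.2 fun x hx => ?_) (sup_le ?_ ?_)
    · rw [← sub_add_cancel x p]
      exact Submodule.add_mem_sup (vsub_mem_vectorSpan K hx hp)
        (Submodule.mem_span_singleton_self p)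
    · rw [vectorSpan_def, Submodule.span_le]
      rintro _ ⟨x, hx, y, hy, rfl⟩
      exact sub_mem (Submodule.subset_span hx) (Submodule.subset_span hy)
    · exact Submodule.span_mono (Set.singleton_subset_iff.2 hp)
  rw [hspan, Submodule.finrank_sup_span_singleton hp_notMem]

lemma alternatingMap_update_basis {R M N ι : Type*} [CommRing R] [AddCommGroup M] [Module R M]
    [AddCommGroup N] [Module R N] [Finite ι] [DecidableEq ι] (f : M [⋀^ι]→ₗ[R] N)
    (B : Basis ι R M) (i : ι) (v : M) : f (update B i v) = B.repr v i • f B := by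
  suffices f.toMultilinearMap.toLinearMap B i = (B.coord i).smulRight (f B) from
    LinearMap.congr_fun this v
  refine B.ext fun j => ?_
  rcases eq_or_ne j i with rfl | hj
  · simp
  · simpa [hj] using f.map_update_self B hj.symm

lemma exists_basis_coe_eq_update {R M ι : Type*} [CommRing R] [AddCommGroup M] [Module R M]
    [Finite ι] [DecidableEq ι] (B : Basis ι R M) {i : ι} {v : M} (hv : IsUnit (B.repr v i)) :
    ∃ B' : Basis ι R M, ⇑B' = update B i v := by
  have := Fintype.ofFinite ι
  have hdet : IsUnit (B.det (update B i v)) := by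
    simpa [alternatingMap_update_basis, B.det_self] using hv
  obtain ⟨hli, hspan⟩ := B.is_basis_iff_det.2 hdet
  exact ⟨Basis.mk hli hspan.ge, Basis.coe_mk hli hspan.ge⟩

lemma det_mem_subring {R n : Type*} [CommRing R] [Fintype n] [DecidableEq n] (S : Subring R)
    {M : Matrix n n R} (hM : ∀ i j, M i j ∈ S) : M.det ∈ S := by
  rw [Matrix.det_apply']
  exact sum_mem fun σ _ => mul_mem (intCast_mem S _) (prod_mem fun i _ => hM _ _)

lemma one_le_abs_repr_of_abs_det_le {K ι : Type*} [Field K] [LinearOrder K]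
    [IsStrictOrderedRing K] [Fintype ι] [DecidableEq ι] {B : Basis ι K (ι → K)} {i : ι} {v : ι → K}
    (h : |(Matrix.of B).det| ≤ |(Matrix.of (update B i v)).det|) : 1 ≤ |B.repr v i| := by
  have hne : (Matrix.of B).det ≠ 0 :=
    (AlternatingMap.map_basis_ne_zero_iff B Matrix.detRowAlternating).2
      (Pi.basisFun_det (R := K) (ι := ι) ▸ (Pi.basisFun K ι).det_ne_zero)
  have hupdate : (Matrix.of (update B i v)).det = B.repr v i * (Matrix.of B).det :=
    alternatingMap_update_basis Matrix.detRowAlternating B i v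
  rwa [hupdate, abs_mul, le_mul_iff_one_le_left (abs_pos.2 hne)] at h

lemma exists_forall_ne_of_card_sub_one_le_ncard {ι α : Type*} [Fintype ι] [Nonempty ι]
    {f : ι → α} (hf : Injective f) {p : α → Prop}
    (h : Fintype.card ι - 1 ≤ {a ∈ Set.range f | p a}.ncard) : ∃ i, ∀ j ≠ i, p (f j) := by
  have himage : {a ∈ Set.range f | p a} = f '' {i | p (f i)} := by
    ext a
    constructor
    · rintro ⟨⟨i, rfl⟩, hi⟩
      exact ⟨i, hi, rfl⟩
    · rintro ⟨i, hi, rfl⟩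
      exact ⟨⟨i, rfl⟩, hi⟩
  have hbad : {i | ¬ p (f i)}.ncard ≤ 1 := by
    have hcompl := Set.ncard_add_ncard_compl {i | p (f i)}
    rw [himage, Set.ncard_image_of_injective _ hf] at h
    rw [Nat.card_eq_fintype_card, Set.compl_ofPred] at hcompl
    lia
  rw [Set.ncard_le_one] at hbad
  by_cases hall : ∀ i, p (f i)
  · exact ⟨Classical.arbitrary ι, fun j _ => hall j⟩
  · obtain ⟨i, hi⟩ := not_forall.1 hall
    exact ⟨i, fun j hj => by_contra fun hpj => hj (hbad j hpj i hi)⟩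

end LinearAlgebra

section Convexity

lemma exists_pos_forall_add_mul_le {K ι : Type*} [Field K] [LinearOrder K] [IsStrictOrderedRing K]
    {s : Set ι} (hs : s.Finite) {f g : ι → K} {c : K} (hf : ∀ x ∈ s, f x ≤ c)
    (hlt : ∀ x ∈ s, f x = c → g x ≤ 0) (hg : ∃ x ∈ s, 0 < g x) :
    ∃ t, 0 < t ∧ (∀ x ∈ s, f x + t * g x ≤ c) ∧ ∃ x ∈ s, 0 < g x ∧ f x + t * g x = c := by
  obtain ⟨y, ⟨hy, hgy⟩, hmin⟩ :=
    Set.exists_min_image {x ∈ s | 0 < g x} (fun x => (c - f x) / g x) (hs.sep _) hg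
  have hfy : f y < c := (hf y hy).lt_of_ne fun h => (hlt y hy h).not_gt hgy
  have hpos : 0 < (c - f y) / g y := div_pos (sub_pos.2 hfy) hgy
  refine ⟨(c - f y) / g y, hpos, fun x hx => ?_, y, hy, hgy, ?_⟩
  · rcases le_or_gt (g x) 0 with hgx | hgx
    · linarith [hf x hx, mul_nonpos_of_nonneg_of_nonpos hpos.le hgx]
    · linarith [(le_div_iff₀ hgx).1 (hmin x ⟨hx, hgx⟩)]
  · rw [div_mul_cancel₀ _ hgy.ne', add_sub_cancel]

lemma exists_pos_of_zero_mem_interior_convexHull {E : Type*} [NormedAddCommGroup E]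
    [NormedSpace ℝ E] {s : Set E} (h0 : (0 : E) ∈ interior (convexHull ℝ s))
    {f : StrongDual ℝ E} (hf : f ≠ 0) : ∃ x ∈ s, 0 < f x := by
  by_contra! hs
  have hhull : convexHull ℝ s ⊆ {x | f x ≤ 0} :=
    convexHull_min hs (convex_halfSpace_le f.toLinearMap.isLinear 0)
  have hmax : IsLocalMax f 0 := by
    filter_upwards [mem_interior_iff_mem_nhds.1 h0] with x hx
    simpa using hhull hx
  exact hf (hmax.hasFDerivAt_eq_zero f.hasFDerivAt)

lemma convexHull_extremePoints_of_finite {E : Type*} [AddCommGroup E] [Module ℝ E]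
    [TopologicalSpace E] [T2Space E] [IsTopologicalAddGroup E] [ContinuousSMul ℝ E]
    [LocallyConvexSpace ℝ E] {s : Set E} (hs : IsCompact s) (hconv : Convex ℝ s)
    (hfin : (s.extremePoints ℝ).Finite) : convexHull ℝ (s.extremePoints ℝ) = s := by
  rw [← (hfin.isClosed_convexHull ℝ).closure_eq, closure_convexHull_extremePoints hs hconv]

lemma isExposed_setOf_eq {𝕜 E : Type*} [TopologicalSpace 𝕜] [Ring 𝕜] [PartialOrder 𝕜]
    [AddCommMonoid E] [TopologicalSpace E] [Module 𝕜 E] {s : Set E} {f : StrongDual 𝕜 E} {c : 𝕜}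
    (hf : ∀ x ∈ s, f x ≤ c) : IsExposed 𝕜 s {x ∈ s | f x = c} := by
  rintro ⟨x₀, hx₀, hfx₀⟩
  refine ⟨f, Set.ext fun x => and_congr_right fun hx => ⟨fun h y hy => ?_, fun h => ?_⟩⟩
  · exact (hf y hy).trans_eq h.symm
  · exact (hf x hx).antisymm (hfx₀ ▸ h x₀ hx₀)

end Convexity

section Lattice

variable {d : ℕ}

lemma natFloor_abs_of_mem_bot {a : ℝ} (ha : a ∈ (⊥ : Subring ℝ)) : (⌊|a|⌋₊ : ℝ) = |a| := by
  obtain ⟨n, rfl⟩ := Subring.mem_bot.1 ha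
  rw [← Int.cast_abs, Int.abs_eq_natAbs, Int.cast_natCast, Nat.floor_natCast]

lemma one_le_abs_of_mem_bot {a : ℝ} (ha : a ∈ (⊥ : Subring ℝ)) (hne : a ≠ 0) : 1 ≤ |a| := by
  obtain ⟨n, rfl⟩ := Subring.mem_bot.1 ha
  exact_mod_cast Int.one_le_abs (Int.cast_ne_zero.1 hne)

lemma isLP_iff_forall_mem_bot {x : Fin d → ℝ} : IsLP x ↔ ∀ i, x i ∈ (⊥ : Subring ℝ) := by
  simp only [IsLP, Subring.mem_bot, eq_comm]

lemma IsLP.dotp_mem_bot {u x : Fin d → ℝ} (hu : IsLP u) (hx : IsLP x) :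
    dotp u x ∈ (⊥ : Subring ℝ) :=
  sum_mem fun i _ =>
    mul_mem (isLP_iff_forall_mem_bot.1 hu i) (isLP_iff_forall_mem_bot.1 hx i)

lemma isZBasis_range_of_repr_mem_bot {B : Basis (Fin d) ℝ (Fin d → ℝ)} (hB : ∀ i, IsLP (B i))
    (hrepr : ∀ x, IsLP x → ∀ i, B.repr x i ∈ (⊥ : Subring ℝ)) : IsZBasis (Set.range B) := by
  refine ⟨B, B.injective, rfl, hB, fun x hx => ?_⟩
  choose c hc using fun i => Subring.mem_bot.1 (hrepr x hx i)
  exact ⟨c, by simp_rw [hc, B.sum_repr]⟩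

end Lattice

section Polytope

variable {d : ℕ} {P : Set (Fin d → ℝ)} {u z x : Fin d → ℝ}

/-- The identification of `ℝ^d` with its dual space given by the standard inner product, through
which the library's linear and continuous functionals apply to `dotp`. -/
def dotpDual : (Fin d → ℝ) ≃ₗ[ℝ] StrongDual ℝ (Fin d → ℝ) :=
  (dotProductEquiv ℝ (Fin d)).trans LinearMap.toContinuousLinearMap

lemma dotp_eq_dotpDual (u x : Fin d → ℝ) : dotp u x = dotpDual u x := rfl

lemma dotp_comm (u x : Fin d → ℝ) : dotp u x = dotp x u := dotProduct_comm u x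

lemma dotp_add_smul_left (u z x : Fin d → ℝ) (t : ℝ) :
    dotp (u + t • z) x = dotp u x + t * dotp z x := by
  simp [dotp_eq_dotpDual]

lemma dotp_neg_left (u x : Fin d → ℝ) : dotp (-u) x = -dotp u x :=
  neg_dotProduct u x

lemma IsLatticePolytope.isCompact (hP : IsLatticePolytope P) : IsCompact P := by
  obtain ⟨V, -, rfl⟩ := hP
  exact V.finite_toSet.isCompact_convexHull ℝ

lemma IsLatticePolytope.convex (hP : IsLatticePolytope P) : Convex ℝ P := by
  obtain ⟨V, -, rfl⟩ := hP
  exact convex_convexHull ℝ _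

lemma IsLatticePolytope.finite_extremePoints (hP : IsLatticePolytope P) :
    (P.extremePoints ℝ).Finite := by
  obtain ⟨V, -, rfl⟩ := hP
  exact V.finite_toSet.subset extremePoints_convexHull_subset

lemma IsLatticePolytope.isLP_of_mem_extremePoints (hP : IsLatticePolytope P)
    (hx : x ∈ P.extremePoints ℝ) : IsLP x := by
  obtain ⟨V, hV, rfl⟩ := hP
  exact hV x (extremePoints_convexHull_subset hx)

lemma IsLatticePolytope.convexHull_extremePoints (hP : IsLatticePolytope P) :
    convexHull ℝ (P.extremePoints ℝ) = P :=
  convexHull_extremePoints_of_finite hP.isCompact hP.convex hP.finite_extremePoints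

lemma IsLatticePolytope.mem_dualPolytope_iff (hP : IsLatticePolytope P) :
    u ∈ dualPolytope P ↔ ∀ v ∈ P.extremePoints ℝ, dotp u v ≤ 1 := by
  refine ⟨fun hu v hv => hu v (extremePoints_subset hv), fun hu y hy => ?_⟩
  rw [← hP.convexHull_extremePoints] at hy
  exact convexHull_min (t := {y | dotp u y ≤ 1}) hu
    (convex_halfSpace_le (dotpDual u).toLinearMap.isLinear 1) hy

/-- The part of `P` on the hyperplane `⟨u, ·⟩ = 1`; a face of `P` when `u` lies in the dual
polytope. -/
def face (P : Set (Fin d → ℝ)) (u : Fin d → ℝ) : Set (Fin d → ℝ) :=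
  {y ∈ P | dotp u y = 1}

lemma isExposed_face (hu : u ∈ dualPolytope P) : IsExposed ℝ P (face P u) :=
  isExposed_setOf_eq (f := dotpDual u) hu

lemma mem_extremePoints_face_iff (hu : u ∈ dualPolytope P) :
    x ∈ (face P u).extremePoints ℝ ↔ x ∈ P.extremePoints ℝ ∧ dotp u x = 1 := by
  rw [(isExposed_face hu).isExtreme.extremePoints_eq]
  exact ⟨fun h => ⟨h.2, h.1.2⟩, fun h => ⟨⟨extremePoints_subset h.1, h.2⟩, h.1⟩⟩

lemma finite_extremePoints_face (hP : IsLatticePolytope P) (hu : u ∈ dualPolytope P) :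
    ((face P u).extremePoints ℝ).Finite :=
  hP.finite_extremePoints.subset fun _ hx => ((mem_extremePoints_face_iff hu).1 hx).1

lemma span_extremePoints_face (hP : IsLatticePolytope P) (hu : u ∈ dualPolytope P) :
    Submodule.span ℝ ((face P u).extremePoints ℝ) = Submodule.span ℝ (face P u) := by
  have hface := isExposed_face hu
  refine le_antisymm (Submodule.span_mono extremePoints_subset) (Submodule.span_le.2 ?_)
  nth_rw 1 [← convexHull_extremePoints_of_finite (hface.isCompact hP.isCompact)
    (hface.convex hP.convex) (finite_extremePoints_face hP hu)]
  exact convexHull_min Submodule.subset_span (Submodule.convex _)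

lemma IsFacetNormal.mem_dualPolytope {F : Set (Fin d → ℝ)} (hu : IsFacetNormal P F u) :
    u ∈ dualPolytope P := hu.2.1

lemma IsFacetNormal.span_face_eq_top (hu : IsFacetNormal P (face P u) u) :
    Submodule.span ℝ (face P u) = ⊤ := by
  obtain ⟨hne, -, -, hrank⟩ := hu
  have hspan := finrank_span_eq_finrank_vectorSpan_add_one (f := (dotpDual u).toLinearMap) hne
    fun y hy => hy.2
  have hle := Submodule.finrank_le (Submodule.span ℝ (face P u))
  refine Submodule.eq_top_of_finrank_eq ?_
  rw [Module.finrank_fin_fun] at *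
  lia

lemma isFacetNormal_face_of_span_eq_top (hu : u ∈ dualPolytope P) (hne : (face P u).Nonempty)
    (hspan : Submodule.span ℝ (face P u) = ⊤) : IsFacetNormal P (face P u) u := by
  have hrank := finrank_span_eq_finrank_vectorSpan_add_one (f := (dotpDual u).toLinearMap) hne
    fun y hy => hy.2
  rw [hspan, finrank_top, Module.finrank_fin_fun] at hrank
  exact ⟨hne, hu, rfl, by lia⟩

lemma IsFacetNormal.mem_extremePoints_dualPolytope (hu : IsFacetNormal P (face P u) u) :
    u ∈ (dualPolytope P).extremePoints ℝ := by
  refine ⟨hu.mem_dualPolytope, fun x hx y hy hxy => ?_⟩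
  -- Each point of the facet cuts out a face of the dual polytope that contains `u`, hence `x`.
  have hface : ∀ p ∈ face P u, dotp x p = dotp u p := fun p hp => by
    have hexposed : IsExposed ℝ (dualPolytope P) (face (dualPolytope P) p) :=
      isExposed_face fun w hw => (dotp_comm p w).trans_le (hw p hp.1)
    have hx_mem := hexposed.isExtreme.left_mem_of_mem_openSegment hx hy
      ⟨hu.mem_dualPolytope, (dotp_comm p u).trans hp.2⟩ hxy
    rw [dotp_comm, hx_mem.2, hp.2]
  refine dotpDual.injective (ContinuousLinearMap.coe_injective ?_)
  exact LinearMap.ext_on hu.span_face_eq_top hface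

lemma exists_pos_add_smul_mem_dualPolytope (hP : IsLatticePolytope P) (h0 : 0 ∈ interior P)
    (hu : u ∈ dualPolytope P) (hz : z ≠ 0)
    (hface : ∀ v ∈ (face P u).extremePoints ℝ, dotp z v ≤ 0) :
    ∃ t : ℝ, 0 < t ∧ u + t • z ∈ dualPolytope P ∧
      ∃ v ∈ P.extremePoints ℝ, 0 < dotp z v ∧ dotp (u + t • z) v = 1 := by
  rw [← hP.convexHull_extremePoints] at h0
  simp_rw [hP.mem_dualPolytope_iff, dotp_add_smul_left]
  exact exists_pos_forall_add_mul_le hP.finite_extremePoints (hP.mem_dualPolytope_iff.1 hu)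
    (fun v hv huv => hface v ((mem_extremePoints_face_iff hu).2 ⟨hv, huv⟩))
    (exists_pos_of_zero_mem_interior_convexHull h0 (dotpDual.map_ne_zero_iff.2 hz))

lemma span_face_eq_top_of_mem_extremePoints_dualPolytope (hP : IsLatticePolytope P)
    (h0 : 0 ∈ interior P) (hu : u ∈ (dualPolytope P).extremePoints ℝ) :
    Submodule.span ℝ (face P u) = ⊤ := by
  by_contra hspan
  obtain ⟨f, hf, hle⟩ := Submodule.exists_le_ker_of_lt_top _ (lt_top_iff_ne_top.2 hspan)
  obtain ⟨z, rfl⟩ := (dotProductEquiv ℝ (Fin d)).surjective f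
  have hz : z ≠ 0 := fun h => hf (by rw [h, map_zero])
  have hface : ∀ v ∈ (face P u).extremePoints ℝ, dotp z v = 0 := fun v hv =>
    hle (Submodule.subset_span (extremePoints_subset hv))
  obtain ⟨s, hs, hs_mem, -⟩ :=
    exists_pos_add_smul_mem_dualPolytope hP h0 hu.1 hz fun v hv => (hface v hv).le
  obtain ⟨t, ht, ht_mem, -⟩ :=
    exists_pos_add_smul_mem_dualPolytope hP h0 hu.1 (neg_ne_zero.2 hz) fun v hv => by
      rw [dotp_neg_left, hface v hv, neg_zero]
  have hsegment : u ∈ openSegment ℝ (u + s • z) (u + t • -z) := by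
    refine ⟨t / (s + t), s / (s + t), by positivity, by positivity, by field_simp; ring, ?_⟩
    match_scalars <;> field_simp <;> ring
  have hsz : s • z = 0 := by simpa using hu.2 hs_mem ht_mem hsegment
  exact (smul_ne_zero hs.ne' hz) hsz

lemma IsReflexive.isLP_of_isFacetNormal (hP : IsReflexive P) (hu : IsFacetNormal P (face P u) u) :
    IsLP u :=
  hP.2.2.isLP_of_mem_extremePoints hu.mem_extremePoints_dualPolytope

lemma IsReflexive.exists_isFacetNormal (hd : 1 ≤ d) (hP : IsReflexive P) :
    ∃ u, IsFacetNormal P (face P u) u := by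
  obtain ⟨hP, h0, hdual⟩ := hP
  have hdual_ne : (dualPolytope P).Nonempty := ⟨0, fun y _ => by simp [dotp]⟩
  obtain ⟨u, hu⟩ := hdual.isCompact.extremePoints_nonempty hdual_ne
  have hspan := span_face_eq_top_of_mem_extremePoints_dualPolytope hP h0 hu
  have hne : (face P u).Nonempty := by
    have : Nonempty (Fin d) := ⟨⟨0, hd⟩⟩
    by_contra hempty
    simp [Set.not_nonempty_iff_eq_empty.1 hempty, bot_ne_top] at hspan
  exact ⟨u, isFacetNormal_face_of_span_eq_top hu.1 hne hspan⟩

/-- `B` is a basis of `ℝ^d` whose members are the vertices of the facet of `P` with outer normal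
`u`; the facets of a simplicial polytope are studied through such bases. -/
structure IsVertexBasis (P : Set (Fin d → ℝ)) (u : Fin d → ℝ)
    (B : Basis (Fin d) ℝ (Fin d → ℝ)) : Prop where
  isFacetNormal : IsFacetNormal P (face P u) u
  range_eq : Set.range B = (face P u).extremePoints ℝ

lemma IsSimplicial.exists_isVertexBasis (hs : IsSimplicial P) (hP : IsLatticePolytope P)
    (hu : IsFacetNormal P (face P u) u) : ∃ B, IsVertexBasis P u B := by
  have := (finite_extremePoints_face hP hu.mem_dualPolytope).to_subtype
  let e : Fin d ≃ (face P u).extremePoints ℝ :=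
    (Finite.equivFinOfCardEq (hs _ ⟨u, hu⟩)).symm
  have hrange : Set.range (fun i => (e i : Fin d → ℝ)) = (face P u).extremePoints ℝ := by
    rw [← comp_def, e.surjective.range_comp, Subtype.range_coe]
  have hspan : ⊤ ≤ Submodule.span ℝ (Set.range fun i => (e i : Fin d → ℝ)) := by
    rw [hrange, span_extremePoints_face hP hu.mem_dualPolytope, hu.span_face_eq_top]
  refine ⟨basisOfTopLeSpanOfCardEqFinrank _ hspan (by simp), hu, ?_⟩
  rw [coe_basisOfTopLeSpanOfCardEqFinrank, hrange]

namespace IsVertexBasis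

variable {B B' : Basis (Fin d) ℝ (Fin d → ℝ)} {u' v : Fin d → ℝ} {i : Fin d}

lemma mem_extremePoints (hB : IsVertexBasis P u B) (i : Fin d) :
    B i ∈ (face P u).extremePoints ℝ :=
  hB.range_eq ▸ Set.mem_range_self i

lemma mem_face (hB : IsVertexBasis P u B) (i : Fin d) : B i ∈ face P u :=
  extremePoints_subset (hB.mem_extremePoints i)

lemma isLP (hB : IsVertexBasis P u B) (hP : IsLatticePolytope P) (i : Fin d) : IsLP (B i) :=
  hP.isLP_of_mem_extremePoints
    ((mem_extremePoints_face_iff hB.isFacetNormal.mem_dualPolytope).1 (hB.mem_extremePoints i)).1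

lemma det_mem_bot (hB : IsVertexBasis P u B) (hP : IsLatticePolytope P) :
    (Matrix.of B).det ∈ (⊥ : Subring ℝ) :=
  det_mem_subring ⊥ fun i => isLP_iff_forall_mem_bot.1 (hB.isLP hP i)

lemma dotp_eq_sum_repr (hB : IsVertexBasis P u B) (x : Fin d → ℝ) :
    dotp u x = ∑ i, B.repr x i := by
  have hdual : (dotpDual u).toLinearMap = ∑ i, B.coord i :=
    B.ext fun j => (hB.mem_face j).2.trans (by simp [Finsupp.single_apply])
  simpa [dotp_eq_dotpDual] using LinearMap.congr_fun hdual x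

lemma dotp_sub_dotp_of_coe_eq_update (hB : IsVertexBasis P u B) (hB' : IsVertexBasis P u' B')
    (hBB' : ⇑B' = update B i v) (x : Fin d → ℝ) :
    dotp u x - dotp u' x = (1 - dotp u' (B i)) * B.repr x i := by
  have hdual : (dotpDual u - dotpDual u').toLinearMap = (1 - dotp u' (B i)) • B.coord i := by
    refine B.ext fun j => ?_
    change dotp u (B j) - dotp u' (B j) = (1 - dotp u' (B i)) * B.repr (B j) i
    rw [(hB.mem_face j).2, B.repr_self]
    rcases eq_or_ne j i with rfl | hj
    · simp
    · have hj_face := (hB'.mem_face j).2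
      rw [hBB', update_of_ne hj] at hj_face
      simp [hj_face, hj]
  exact LinearMap.congr_fun hdual x

lemma nbrVertex_of_coe_eq_update (hB : IsVertexBasis P u B) (hB' : IsVertexBasis P u' B')
    (hBB' : ⇑B' = update B i v) (hv : v ∉ face P u) : NbrVertex P (face P u) (B i) v := by
  have hv' : v ∈ (face P u').extremePoints ℝ := by
    simpa [hBB'] using hB'.mem_extremePoints i
  refine ⟨face P u', ⟨⟨u', hB'.isFacetNormal⟩, ?_, ?_⟩, hv', hv⟩
  · exact fun h => hv (h ▸ extremePoints_subset hv')
  · rw [← hB.range_eq]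
    rintro _ ⟨⟨j, rfl⟩, hj⟩
    have hji : j ≠ i := fun h => hj (congrArg B h)
    simpa [hBB', hji] using hB'.mem_face j

lemma exists_adjacent_vertex (hB : IsVertexBasis P u B) (hP : IsLatticePolytope P)
    (h0 : 0 ∈ interior P) (i : Fin d) :
    ∃ u' ∈ dualPolytope P, (∀ j ≠ i, dotp u' (B j) = 1) ∧
      ∃ v ∈ (face P u').extremePoints ℝ, v ∉ face P u ∧ B.repr v i ≠ 0 := by
  have hu := hB.isFacetNormal.mem_dualPolytope
  -- Tilt the facet about its ridge opposite to `B i` until it meets another vertex.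
  obtain ⟨z, hz⟩ := (dotProductEquiv ℝ (Fin d)).surjective (-B.coord i)
  have hz_apply (x : Fin d → ℝ) : dotp z x = -B.repr x i := LinearMap.congr_fun hz x
  have hz_ne : z ≠ 0 := by
    rintro rfl
    simpa [dotp] using hz_apply (B i)
  have hz_face : ∀ x ∈ (face P u).extremePoints ℝ, dotp z x ≤ 0 := by
    rw [← hB.range_eq]
    rintro _ ⟨j, rfl⟩
    rw [hz_apply, B.repr_self, Finsupp.single_apply]
    split_ifs <;> norm_num
  obtain ⟨t, -, hu', v, hvP, hzv, hu'v⟩ :=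
    exists_pos_add_smul_mem_dualPolytope hP h0 hu hz_ne hz_face
  refine ⟨u + t • z, hu', fun j hj => ?_, v, (mem_extremePoints_face_iff hu').2 ⟨hvP, hu'v⟩,
    fun hv => ?_, fun hv => ?_⟩
  · simp [dotp_add_smul_left, (hB.mem_face j).2, hz_apply, hj]
  · exact (hz_face v ((mem_extremePoints_face_iff hu).2 ⟨hvP, hv.2⟩)).not_gt hzv
  · simp [hz_apply, hv] at hzv

lemma of_range_subset (hs : IsSimplicial P) (hP : IsLatticePolytope P) (hu : u ∈ dualPolytope P)
    (hne : (face P u).Nonempty) (hsub : Set.range B ⊆ (face P u).extremePoints ℝ) :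
    IsVertexBasis P u B := by
  have hspan : ⊤ ≤ Submodule.span ℝ (face P u) :=
    B.span_eq.ge.trans (Submodule.span_mono (hsub.trans extremePoints_subset))
  have hfacet := isFacetNormal_face_of_span_eq_top hu hne (top_le_iff.1 hspan)
  refine ⟨hfacet, Set.eq_of_subset_of_ncard_le hsub ?_ (finite_extremePoints_face hP hu)⟩
  rw [hs _ ⟨u, hfacet⟩, ← Set.image_univ, Set.ncard_image_of_injective _ B.injective,
    Set.ncard_univ, Nat.card_fin]

lemma exists_nbrVertex (hB : IsVertexBasis P u B) (hP : IsReflexive P) (hs : IsSimplicial P)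
    (i : Fin d) :
    ∃ v, NbrVertex P (face P u) (B i) v ∧
      ∃ u' B', IsVertexBasis P u' B' ∧ ⇑B' = update B i v := by
  obtain ⟨u', hu', hu'B, v, hv, hv_notMem, hrepr⟩ := hB.exists_adjacent_vertex hP.1 hP.2.1 i
  obtain ⟨B', hBB'⟩ := exists_basis_coe_eq_update B hrepr.isUnit
  have hsub : Set.range B' ⊆ (face P u').extremePoints ℝ := by
    rintro _ ⟨j, rfl⟩
    rcases eq_or_ne j i with rfl | hj
    · rwa [hBB', update_self]
    · rw [hBB', update_of_ne hj, mem_extremePoints_face_iff hu']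
      have hBj := hB.mem_extremePoints j
      rw [mem_extremePoints_face_iff hB.isFacetNormal.mem_dualPolytope] at hBj
      exact ⟨hBj.1, hu'B j hj⟩
  have hB' := of_range_subset hs hP.1 hu' ⟨v, extremePoints_subset hv⟩ hsub
  exact ⟨v, hB.nbrVertex_of_coe_eq_update hB' hBB' hv_notMem, u', B', hB', hBB'⟩

lemma exists_forall_abs_det_le (hP : IsLatticePolytope P) (hne : ∃ u B, IsVertexBasis P u B) :
    ∃ u B, IsVertexBasis P u B ∧
      ∀ u' B', IsVertexBasis P u' B' → |(Matrix.of B).det| ≤ |(Matrix.of B').det| := by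
  obtain ⟨u₀, B₀, hB₀⟩ := hne
  let vol (p : (Fin d → ℝ) × Basis (Fin d) ℝ (Fin d → ℝ)) : ℕ := ⌊|(Matrix.of p.2).det|⌋₊
  obtain ⟨⟨u, B⟩, hB, hmin⟩ :=
    (measure vol).wf.has_min {p | IsVertexBasis P p.1 p.2} ⟨(u₀, B₀), hB₀⟩
  refine ⟨u, B, hB, fun u' B' hB' => ?_⟩
  have hvol : vol (u, B) ≤ vol (u', B') := not_lt.1 (hmin (u', B') hB')
  rw [← natFloor_abs_of_mem_bot (det_mem_bot hB hP),
    ← natFloor_abs_of_mem_bot (det_mem_bot hB' hP)]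
  exact_mod_cast hvol

lemma repr_mem_bot_of_dotp_eq_zero (hB : IsVertexBasis P u B) (hB' : IsVertexBasis P u' B')
    (hP : IsReflexive P) (hBB' : ⇑B' = update B i v) (hv : dotp u v = 0)
    (hdet : |(Matrix.of B).det| ≤ |(Matrix.of B').det|) (hx : IsLP x) :
    B.repr x i ∈ (⊥ : Subring ℝ) := by
  have hu := hP.isLP_of_isFacetNormal hB.isFacetNormal
  have hu' := hP.isLP_of_isFacetNormal hB'.isFacetNormal
  have hdiff := hB.dotp_sub_dotp_of_coe_eq_update hB' hBB'
  set t := 1 - dotp u' (B i)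
  have ht : t ∈ (⊥ : Subring ℝ) := sub_mem (one_mem _) (hu'.dotp_mem_bot (hB.isLP hP.1 i))
  have htv : t * B.repr v i = -1 := by
    have hu'v : dotp u' v = 1 := by simpa [hBB'] using (hB'.mem_face i).2
    rw [← hdiff, hv, hu'v, zero_sub]
  have hv_repr : 1 ≤ |B.repr v i| := one_le_abs_repr_of_abs_det_le (hBB' ▸ hdet)
  have ht_abs : |t| = 1 := by
    have hmul : |t| * |B.repr v i| = 1 := by rw [← abs_mul, htv, abs_neg, abs_one]
    have ht_ne : t ≠ 0 := left_ne_zero_of_mul (htv.trans_ne (by norm_num))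
    have ht_ge : 1 ≤ |t| := one_le_abs_of_mem_bot ht ht_ne
    nlinarith
  have hx_repr : B.repr x i = t * (dotp u x - dotp u' x) := by
    rw [hdiff, ← mul_assoc, ← abs_mul_abs_self t, ht_abs, one_mul, one_mul]
  rw [hx_repr]
  exact mul_mem ht (sub_mem (hu.dotp_mem_bot hx) (hu'.dotp_mem_bot hx))

lemma repr_mem_bot_of_forall_ne (hB : IsVertexBasis P u B) (hu : IsLP u) (hx : IsLP x)
    (hrepr : ∀ j ≠ i, B.repr x j ∈ (⊥ : Subring ℝ)) (j : Fin d) :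
    B.repr x j ∈ (⊥ : Subring ℝ) := by
  rcases eq_or_ne j i with rfl | hj
  · have hsum := hB.dotp_eq_sum_repr x
    rw [← Finset.add_sum_erase _ _ (Finset.mem_univ j), ← sub_eq_iff_eq_add] at hsum
    rw [← hsum]
    exact sub_mem (hu.dotp_mem_bot hx) (sum_mem fun k hk => hrepr k (Finset.ne_of_mem_erase hk))
  · exact hrepr j hj

end IsVertexBasis

end Polytope

/-- if for every facet `F` at least `d-1` vertices of `F` have their
neighboring vertex in `H(F,0)`, then some facet `G` has vertex set a `ℤ`-basis of `ℤ^d`. -/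
theorem stmt13 {d : ℕ} (hd : 1 ≤ d) (P : Set (Fin d → ℝ))
    (hP : IsReflexive P) (hs : IsSimplicial P)
    (h : ∀ F u, IsFacetNormal P F u →
      d - 1 ≤ {v ∈ Set.extremePoints ℝ F | ∀ v', NbrVertex P F v v' → dotp u v' = 0}.ncard) :
    ∃ G, IsFacet P G ∧ IsZBasis (Set.extremePoints ℝ G) := by
  obtain ⟨u₀, hu₀⟩ := hP.exists_isFacetNormal hd
  obtain ⟨u, B, hB, hmin⟩ :=
    IsVertexBasis.exists_forall_abs_det_le hP.1 ⟨u₀, hs.exists_isVertexBasis hP.1 hu₀⟩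
  have : Nonempty (Fin d) := ⟨⟨0, hd⟩⟩
  obtain ⟨i, hi⟩ := exists_forall_ne_of_card_sub_one_le_ncard B.injective
    (p := fun w => ∀ v, NbrVertex P (face P u) w v → dotp u v = 0)
    (by simpa only [hB.range_eq, Fintype.card_fin] using h _ u hB.isFacetNormal)
  refine ⟨face P u, ⟨u, hB.isFacetNormal⟩, ?_⟩
  rw [← hB.range_eq]
  refine isZBasis_range_of_repr_mem_bot (hB.isLP hP.1) fun x hx => ?_
  have hu := hP.isLP_of_isFacetNormal hB.isFacetNormal
  refine hB.repr_mem_bot_of_forall_ne (i := i) hu hx fun j hj => ?_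
  obtain ⟨v, hv, u', B', hB', hBB'⟩ := hB.exists_nbrVertex hP hs j
  exact hB.repr_mem_bot_of_dotp_eq_zero hB' hP hBB' (hi j hj v hv) (hmin u' B' hB') hx
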